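/- arXiv:2207.10483 — 3 statements merged into one kernel-verified Lean document; each statement's English description precedes it below -/
import Mathlib

section
/- Let p be an odd prime such that there exists a Hadamard matrix of order 4p, and suppose the real number α is admissible for the fractional Haemers bound H_f^{𝔽_p} over the field with p elements. Then α ≥ (log₂ C(4p−1, 2p) − log₂ ∑_{i=0}^{p−1} C(4p−1, i) − log₂(4p−1)) / log₂(4p−1), where C(n,k) denotes the binomial coefficient. -/
open scoped Kronecker
open Matrix

namespace NCG

/-- Existence of a cohomomorphism from `T` to `S` (written `T ≤ S`). -/
def Cohom {A B : Type} [Fintype A] [DecidableEq A] [Fintype B] [DecidableEq B]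
    (T : Submodule ℂ (Matrix B B ℂ)) (S : Submodule ℂ (Matrix A A ℂ)) : Prop :=
  ∃ (k : ℕ) (E : Fin k → Matrix A B ℂ),
    (∑ i, (E i)ᴴ * E i) = 1 ∧ ∀ i j : Fin k, ∀ M ∈ S, (E i)ᴴ * M * E j ∈ T

/-- The noncommutative graph `Ḡ` of a classical graph `G`. -/
noncomputable def graphNC {V : Type} [Fintype V] [DecidableEq V] (G : SimpleGraph V) :
    Submodule ℂ (Matrix V V ℂ) :=
  Submodule.span ℂ {M | ∃ x y : V, (G.Adj x y ∨ x = y) ∧ M = Matrix.single x y 1}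

/-- The confusability graph `Q_d = ℂ·I_d` of the noiseless `d`-dimensional quantum channel. -/
noncomputable def qGraph (d : ℕ) : Submodule ℂ (Matrix (Fin d) (Fin d) ℂ) :=
  Submodule.span ℂ {(1 : Matrix (Fin d) (Fin d) ℂ)}

/-- Tensor product of noncommutative graphs. -/
noncomputable def ncTensor {A B : Type} [Fintype A] [DecidableEq A] [Fintype B] [DecidableEq B]
    (S : Submodule ℂ (Matrix A A ℂ)) (T : Submodule ℂ (Matrix B B ℂ)) :
    Submodule ℂ (Matrix (A × B) (A × B) ℂ) :=
  Submodule.span ℂ {M | ∃ X ∈ S, ∃ Y ∈ T, M = X ⊗ₖ Y}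

/-- Direct sum of a finite family of noncommutative graphs. -/
noncomputable def ncDirectSum {ι : Type} [Fintype ι] [DecidableEq ι] {V : ι → Type}
    [∀ i, Fintype (V i)] [∀ i, DecidableEq (V i)]
    (S : ∀ i, Submodule ℂ (Matrix (V i) (V i) ℂ)) :
    Submodule ℂ (Matrix (Σ i, V i) (Σ i, V i) ℂ) where
  carrier := {M | (∀ p q : Σ i, V i, p.1 ≠ q.1 → M p q = 0) ∧
    ∀ i, (Matrix.of fun x y : V i => M ⟨i, x⟩ ⟨i, y⟩) ∈ S i}
  add_mem' := by
    rintro a b ⟨ha1, ha2⟩ ⟨hb1, hb2⟩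
    refine ⟨fun p q h => ?_, fun i => ?_⟩
    · simp [Matrix.add_apply, ha1 p q h, hb1 p q h]
    · have h := (S i).add_mem (ha2 i) (hb2 i)
      exact h
  zero_mem' := by
    refine ⟨fun p q h => rfl, fun i => ?_⟩
    have h0 : (Matrix.of fun x y : V i =>
        (0 : Matrix (Σ j, V j) (Σ j, V j) ℂ) ⟨i, x⟩ ⟨i, y⟩) = 0 := rfl
    rw [h0]
    exact (S i).zero_mem
  smul_mem' := by
    rintro c a ⟨ha1, ha2⟩
    refine ⟨fun p q h => ?_, fun i => ?_⟩
    · simp [Matrix.smul_apply, ha1 p q h]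
    · have h := (S i).smul_mem c (ha2 i)
      exact h

/-- `⊕_{d=1}^r Ḡ_d ⊗ Q_d`, where `G d` plays the role of `G_{d+1}` for `d : Fin r`. -/
noncomputable def bigSum {r : ℕ} {V : Fin r → Type} [∀ d, Fintype (V d)] [∀ d, DecidableEq (V d)]
    (G : ∀ d, SimpleGraph (V d)) :
    Submodule ℂ (Matrix (Σ d : Fin r, V d × Fin (d.1 + 1))
      (Σ d : Fin r, V d × Fin (d.1 + 1)) ℂ) :=
  ncDirectSum fun d : Fin r => ncTensor (graphNC (G d)) (qGraph (d.1 + 1))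

/-- The extension `F_α` of a graph parameter `F` with exponent `α` is monotone under
cohomomorphisms of noncommutative graphs of the form `⊕_{d=1}^r Ḡ_d ⊗ Q_d`
(the exponent `α` is admissible for `F`). -/
def MonotoneExt (F : ∀ (V : Type) [Fintype V] [DecidableEq V], SimpleGraph V → ℝ)
    (α : ℝ) : Prop :=
  ∀ (r s : ℕ) (V : Fin r → Type) (W : Fin s → Type)
    [∀ d, Fintype (V d)] [∀ d, DecidableEq (V d)]
    [∀ d, Fintype (W d)] [∀ d, DecidableEq (W d)]
    (G : ∀ d, SimpleGraph (V d)) (H : ∀ d, SimpleGraph (W d)),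
    Cohom (bigSum H) (bigSum G) →
    ∑ d : Fin s, F (W d) (H d) * ((d.1 + 1 : ℕ) : ℝ) ^ α ≤
      ∑ d : Fin r, F (V d) (G d) * ((d.1 + 1 : ℕ) : ℝ) ^ α

/-- The fractional Haemers bound of a graph over a field `F`. -/
noncomputable def fracHaemers (F : Type) [Field F] {V : Type} [Fintype V] [DecidableEq V]
    (G : SimpleGraph V) : ℝ :=
  sInf {t : ℝ | ∃ (a b : ℕ) (S : V → Submodule F (Fin a → F)), 0 < b ∧
    (∀ g, Module.finrank F (S g) = b) ∧
    (∀ g, S g ⊓ (⨆ g' ∈ {g' : V | g' ≠ g ∧ ¬ G.Adj g g'}, S g') = ⊥) ∧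
    t = (a : ℝ) / (b : ℝ)}

/-- A representation of `G` by vectors `u g` that are separated by functionals `w g` yields an
upper bound for the fractional Haemers bound. -/
theorem exists_subspaceRep_of_separating {F : Type} [Field F] {V κ : Type} [Fintype κ]
    (G : SimpleGraph V) (u w : V → κ → F)
    (hdiag : ∀ g, w g ⬝ᵥ u g ≠ 0)
    (hoff : ∀ g g', g' ≠ g → ¬ G.Adj g g' → w g ⬝ᵥ u g' = 0) :
    ∃ (a b : ℕ) (S : V → Submodule F (Fin a → F)), 0 < b ∧
      (∀ g, Module.finrank F (S g) = b) ∧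
      (∀ g, S g ⊓ (⨆ g' ∈ {g' : V | g' ≠ g ∧ ¬ G.Adj g g'}, S g') = ⊥) ∧
      (Fintype.card κ : ℝ) = (a : ℝ) / (b : ℝ) := by
  classical
  let e := Fintype.equivFin κ
  let L : V → (Fin (Fintype.card κ) → F) →ₗ[F] F := fun g => dotProductBilin F F (w g ∘ e.symm)
  have hL : ∀ g g', L g (u g' ∘ e.symm) = w g ⬝ᵥ u g' := fun g g' =>
    Equiv.sum_comp e.symm fun k => w g k * u g' k
  refine ⟨Fintype.card κ, 1, fun g => F ∙ (u g ∘ e.symm), one_pos, fun g => ?_, fun g => ?_,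
    by simp⟩
  · refine finrank_span_singleton fun h => hdiag g ?_
    rw [← hL, h, map_zero]
  · have hker : (⨆ g' ∈ {g' : V | g' ≠ g ∧ ¬ G.Adj g g'}, F ∙ (u g' ∘ e.symm)) ≤
        LinearMap.ker (L g) := by
      refine iSup₂_le fun g' hg' => ?_
      rw [Submodule.span_singleton_le_iff_mem, LinearMap.mem_ker, hL]
      exact hoff g g' hg'.1 hg'.2
    rw [eq_bot_iff]
    rintro x ⟨hx, hx'⟩
    obtain ⟨c, rfl⟩ := Submodule.mem_span_singleton.1 hx
    have h0 : L g (c • (u g ∘ e.symm)) = 0 := hker hx'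
    rw [map_smul, hL, smul_eq_mul] at h0
    have hc : c = 0 := (mul_eq_zero.1 h0).resolve_right (hdiag g)
    simp [hc]

theorem fracHaemers_le_card {F : Type} [Field F] {V κ : Type} [Fintype V] [DecidableEq V]
    [Fintype κ] (G : SimpleGraph V) (u w : V → κ → F)
    (hdiag : ∀ g, w g ⬝ᵥ u g ≠ 0)
    (hoff : ∀ g g', g' ≠ g → ¬ G.Adj g g' → w g ⬝ᵥ u g' = 0) :
    fracHaemers F G ≤ Fintype.card κ := by
  refine csInf_le ⟨0, ?_⟩ (exists_subspaceRep_of_separating G u w hdiag hoff)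
  rintro _ ⟨a, b, S, -, -, -, rfl⟩
  positivity

theorem fracHaemers_nonpos_of_isEmpty {F : Type} [Field F] {V : Type} [Fintype V]
    [DecidableEq V] [IsEmpty V] (G : SimpleGraph V) : fracHaemers F G ≤ 0 := by
  simpa using fracHaemers_le_card (F := F) (κ := Empty) G isEmptyElim isEmptyElim
    isEmptyElim isEmptyElim

theorem card_le_fracHaemers_bot {F : Type} [Field F] {V : Type} [Fintype V] [DecidableEq V] :
    (Fintype.card V : ℝ) ≤ fracHaemers F (⊥ : SimpleGraph V) := by
  refine le_csInf ⟨_, exists_subspaceRep_of_separating (F := F) (κ := V) ⊥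
    (fun g => Pi.single g 1) (fun g => Pi.single g 1) (by simp) ?_⟩ ?_
  · intro g g' h _
    simp [h.symm]
  · rintro _ ⟨a, b, S, hb, hS, hind, rfl⟩
    have hi : iSupIndep S := by
      intro g
      rw [disjoint_iff]
      simpa using hind g
    have hle := LinearMap.finrank_le_finrank_of_injective hi.dfinsupp_lsum_injective
    have hsum : Module.finrank F (Π₀ g, S g) = Fintype.card V * b := by
      refine (Module.finrank_directSum (R := F) fun g => S g).trans ?_
      simp [hS]
    rw [hsum, Module.finrank_fin_fun] at hle
    rw [le_div_iff₀ (by exact_mod_cast hb)]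
    exact_mod_cast hle

theorem exists_eq_kronecker_one {V : Type} [Fintype V] [DecidableEq V] (G : SimpleGraph V)
    (d : ℕ) {M : Matrix (V × Fin d) (V × Fin d) ℂ}
    (hM : M ∈ ncTensor (graphNC G) (qGraph d)) :
    ∃ C : Matrix V V ℂ, (∀ x y, x ≠ y → ¬ G.Adj x y → C x y = 0) ∧
      M = C ⊗ₖ (1 : Matrix (Fin d) (Fin d) ℂ) := by
  induction hM using Submodule.span_induction with
  | mem M hM =>
    obtain ⟨X, hX, Y, hY, rfl⟩ := hM
    obtain ⟨c, rfl⟩ := Submodule.mem_span_singleton.1 hY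
    refine ⟨c • X, fun x y hxy hG => ?_, by
      rw [Matrix.kronecker_smul, Matrix.smul_kronecker]⟩
    have hX0 : X x y = 0 := by
      induction hX using Submodule.span_induction with
      | mem X hX =>
        obtain ⟨a, b, hab, rfl⟩ := hX
        refine Matrix.single_apply_of_ne _ _ _ _ _ ?_
        rintro ⟨rfl, rfl⟩
        exact hab.elim hG hxy
      | zero => rfl
      | add X Y _ _ hX hY => simp [hX, hY]
      | smul c X _ hX => simp [hX]
    simp [hX0]
  | zero => exact ⟨0, by simp, by simp⟩
  | add M N _ _ hM hN =>
    obtain ⟨C, hC, rfl⟩ := hM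
    obtain ⟨D, hD, rfl⟩ := hN
    exact ⟨C + D, fun x y h h' => by simp [hC x y h h', hD x y h h'],
      (Matrix.add_kronecker _ _ _).symm⟩
  | smul c M _ hM =>
    obtain ⟨C, hC, rfl⟩ := hM
    exact ⟨c • C, fun x y h h' => by simp [hC x y h h'], (Matrix.smul_kronecker _ _ _).symm⟩

theorem mem_bigSum_bot {W : Type} [Fintype W] [DecidableEq W]
    (N : Matrix (Σ d : Fin 1, W × Fin (d.1 + 1)) (Σ d : Fin 1, W × Fin (d.1 + 1)) ℂ)
    (hN : ∀ p q, p.2.1 ≠ q.2.1 → N p q = 0) :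
    N ∈ bigSum (fun _ : Fin 1 => (⊥ : SimpleGraph W)) := by
  refine ⟨fun p q h => (h (Subsingleton.elim _ _)).elim, fun d => ?_⟩
  obtain rfl : d = 0 := Subsingleton.elim _ _
  have hsum : (Matrix.of fun x y : W × Fin ((0 : Fin 1).1 + 1) => N ⟨0, x⟩ ⟨0, y⟩) =
      ∑ w : W, N ⟨0, w, 0⟩ ⟨0, w, 0⟩ •
        (Matrix.single w w (1 : ℂ) ⊗ₖ
          (1 : Matrix (Fin ((0 : Fin 1).1 + 1)) (Fin ((0 : Fin 1).1 + 1)) ℂ)) := by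
    ext ⟨w, i⟩ ⟨w', j⟩
    obtain rfl : i = 0 := Subsingleton.elim (α := Fin 1) _ _
    obtain rfl : j = 0 := Subsingleton.elim (α := Fin 1) _ _
    rw [Matrix.sum_apply]
    by_cases h : w = w'
    · subst h
      simp [Matrix.single_apply]
    · rw [Matrix.of_apply, hN _ _ h, eq_comm]
      refine Finset.sum_eq_zero fun x _ => ?_
      have : ¬ (x = w ∧ x = w') := fun hx => h (hx.1.symm.trans hx.2)
      simp [this]
  rw [hsum]
  refine Submodule.sum_mem _ fun w _ => Submodule.smul_mem _ _ (Submodule.subset_span ?_)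
  exact ⟨_, Submodule.subset_span ⟨w, w, Or.inr rfl, rfl⟩, _, Submodule.subset_span rfl, rfl⟩

/-- If every `G d` has an orthonormal representation in dimension `d + 1`, with adjacent vertices
represented by orthogonal vectors, then all vertices can be transmitted perfectly. -/
theorem cohom_bot_of_orthonormalRep {r : ℕ} {V : Fin r → Type} [∀ d, Fintype (V d)]
    [∀ d, DecidableEq (V d)] (G : ∀ d, SimpleGraph (V d))
    (φ : ∀ d, V d → Fin (d.1 + 1) → ℂ)
    (hunit : ∀ d v, star (φ d v) ⬝ᵥ φ d v = 1)
    (horth : ∀ d v v', (G d).Adj v v' → star (φ d v) ⬝ᵥ φ d v' = 0) :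
    Cohom (bigSum (fun _ : Fin 1 => (⊥ : SimpleGraph (Σ d, V d)))) (bigSum G) := by
  let E : Matrix (Σ d : Fin r, V d × Fin (d.1 + 1))
      (Σ e : Fin 1, (Σ d, V d) × Fin (e.1 + 1)) ℂ :=
    fun q y => if (⟨q.1, q.2.1⟩ : Σ d, V d) = y.2.1 then φ q.1 q.2.1 q.2.2 else 0
  have hE : ∀ (q : Σ d : Fin r, V d × Fin (d.1 + 1)) (y : Σ e : Fin 1, (Σ d, V d) × Fin (e.1 + 1)),
      E q y = if (⟨q.1, q.2.1⟩ : Σ d, V d) = y.2.1 then φ q.1 q.2.1 q.2.2 else 0 :=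
    fun _ _ => rfl
  have hsum : ∀ (y : Σ e : Fin 1, (Σ d, V d) × Fin (e.1 + 1))
      (f : (Σ d : Fin r, V d × Fin (d.1 + 1)) → ℂ → ℂ), (∀ q, f q 0 = 0) →
      ∑ q, f q (E q y) =
        ∑ i, f ⟨y.2.1.1, y.2.1.2, i⟩ (φ y.2.1.1 y.2.1.2 i) := by
    rintro ⟨e, ⟨d, v⟩, i⟩ f hf
    rw [Fintype.sum_sigma, Finset.sum_eq_single d, Fintype.sum_prod_type,
      Finset.sum_eq_single v]
    · simp [hE]
    · intro v' _ hv
      simp [hE, hv, hf]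
    · simp
    · intro d' _ hd
      simp [hE, hd, hf]
    · simp
  have hentry : ∀ (M : Matrix (Σ d : Fin r, V d × Fin (d.1 + 1))
      (Σ d : Fin r, V d × Fin (d.1 + 1)) ℂ) (x y : Σ e : Fin 1, (Σ d, V d) × Fin (e.1 + 1)),
      (Eᴴ * M * E) x y = ∑ j, (∑ i, star (φ x.2.1.1 x.2.1.2 i) *
        M ⟨x.2.1.1, x.2.1.2, i⟩ ⟨y.2.1.1, y.2.1.2, j⟩) * φ y.2.1.1 y.2.1.2 j := by
    intro M x y
    rw [Matrix.mul_apply, hsum y (fun q c => (Eᴴ * M) x q * c) (by simp)]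
    refine Finset.sum_congr rfl fun j _ => ?_
    rw [Matrix.mul_apply]
    exact congrArg (· * _) (hsum x (fun q c => star c * M q _) (by simp))
  have hker : ∀ {d : Fin r} (C : Matrix (V d) (V d) ℂ) (v v' : V d),
      ∑ j, (∑ i, star (φ d v i) *
        (C ⊗ₖ (1 : Matrix (Fin (d.1 + 1)) (Fin (d.1 + 1)) ℂ)) (v, i) (v', j)) * φ d v' j =
        C v v' * (star (φ d v) ⬝ᵥ φ d v') := by
    intro d C v v'
    rw [dotProduct, Finset.mul_sum]
    refine Finset.sum_congr rfl fun j _ => ?_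
    simp [Matrix.one_apply]
    ring
  refine ⟨1, fun _ => E, ?_, fun _ _ M hM => mem_bigSum_bot _ ?_⟩
  · rw [Fin.sum_univ_one]
    ext ⟨e, ⟨d, v⟩, i⟩ ⟨e', ⟨d', v'⟩, j⟩
    obtain rfl : e = e' := Subsingleton.elim _ _
    obtain rfl : e = 0 := Subsingleton.elim _ _
    obtain rfl : i = j := Subsingleton.elim (α := Fin 1) _ _
    rw [← Matrix.mul_one Eᴴ, hentry]
    by_cases hd : d = d'
    · subst hd
      have h1 : ∀ i j, (1 : Matrix (Σ d : Fin r, V d × Fin (d.1 + 1))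
          (Σ d : Fin r, V d × Fin (d.1 + 1)) ℂ) ⟨d, v, i⟩ ⟨d, v', j⟩ =
          ((1 : Matrix (V d) (V d) ℂ) ⊗ₖ
            (1 : Matrix (Fin (d.1 + 1)) (Fin (d.1 + 1)) ℂ)) (v, i) (v', j) := by
        intro i j
        by_cases hv : v = v' <;> by_cases hij : i = j <;> simp [Matrix.one_apply, hv, hij]
      simp only [h1, hker]
      by_cases hv : v = v'
      · subst hv
        simp [hunit]
      · simp [hv]
    · simp [hd]
  · rintro ⟨e, ⟨d, v⟩, i⟩ ⟨e', ⟨d', v'⟩, j⟩ hne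
    rw [hentry]
    by_cases hd : d = d'
    · subst hd
      obtain ⟨C, hC, hMC⟩ := exists_eq_kronecker_one (G d) _ (hM.2 d)
      have hMe : ∀ i j, M ⟨d, v, i⟩ ⟨d, v', j⟩ =
          (C ⊗ₖ (1 : Matrix (Fin (d.1 + 1)) (Fin (d.1 + 1)) ℂ)) (v, i) (v', j) := by
        intro i j
        rw [← hMC]
        rfl
      simp only [hMe, hker]
      by_cases hadj : (G d).Adj v v'
      · rw [horth d v v' hadj, mul_zero]
      · rw [hC v v' (fun h => hne (by simp [h])) hadj, zero_mul]
    · refine Finset.sum_eq_zero fun j _ => ?_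
      rw [Finset.sum_eq_zero, zero_mul]
      intro i _
      rw [hM.1 _ _ hd, mul_zero]

theorem choose_sub_one_prime_sub_one_eq_zero (p m : ℕ) [Fact p.Prime] (h1 : m ≠ p)
    (h2 : m < 2 * p) (h0 : 0 < m) : (((m - 1).choose (p - 1) : ℕ) : ZMod p) = 0 := by
  rcases Nat.lt_or_ge m p with h | h
  · rw [Nat.choose_eq_zero_of_lt (by omega), Nat.cast_zero]
  · have hp : 0 < p := (Fact.out : p.Prime).pos
    rw [(ZMod.natCast_eq_natCast_iff _ _ _).2
      (Choose.choose_modEq_choose_mod_mul_choose_div_nat (p := p))]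
    have hm : (m - 1) % p = m - 1 - p := by
      rw [Nat.mod_eq_sub_mod (by omega), Nat.mod_eq_of_lt (by omega)]
    rw [hm, Nat.mod_eq_of_lt (by omega : p - 1 < p), Nat.choose_eq_zero_of_lt (by omega)]
    simp

theorem choose_two_mul_prime_sub_one_ne_zero (p : ℕ) [Fact p.Prime] :
    (((2 * p - 1).choose (p - 1) : ℕ) : ZMod p) ≠ 0 := by
  have hp : 1 < p := (Fact.out : p.Prime).one_lt
  rw [(ZMod.natCast_eq_natCast_iff _ _ _).2
    (Choose.choose_modEq_choose_mod_mul_choose_div_nat (p := p))]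
  have hm : (2 * p - 1) % p = p - 1 := by
    rw [Nat.mod_eq_sub_mod (by omega), Nat.mod_eq_of_lt (by omega)]
    omega
  rw [hm, Nat.mod_eq_of_lt (by omega : p - 1 < p), Nat.div_eq_of_lt (by omega : p - 1 < p)]
  simp

/-- The truncated alternating sum over the subsets of `A ∩ B` with fewer than `p` elements. -/
theorem sum_neg_one_pow_card_subset_inter {n p : ℕ} (hp : 0 < p) (R : Type) [CommRing R]
    (A B : Finset (Fin n)) (hAB : 0 < (A ∩ B).card) :
    ∑ K : {K : Finset (Fin n) // K.card < p},
      (if K.1 ⊆ A then (-1 : R) ^ K.1.card else 0) * (if K.1 ⊆ B then 1 else 0) =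
      (-1) ^ (p - 1) * (((A ∩ B).card - 1).choose (p - 1) : ℕ) := by
  have h1 : ∑ K : {K : Finset (Fin n) // K.card < p},
      (if K.1 ⊆ A then (-1 : R) ^ K.1.card else 0) * (if K.1 ⊆ B then 1 else 0) =
      ∑ K ∈ (A ∩ B).powerset, if K.card < p then (-1 : R) ^ K.card else 0 := by
    rw [← Finset.sum_subtype (Finset.univ.filter fun K : Finset (Fin n) => K.card < p) (by simp)
      fun K => (if K ⊆ A then (-1 : R) ^ K.card else 0) * (if K ⊆ B then 1 else 0),
      Finset.sum_filter, ← Finset.sum_subset (Finset.subset_univ (A ∩ B).powerset)]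
    · refine Finset.sum_congr rfl fun K hK => ?_
      have hK' := Finset.subset_inter_iff.1 (Finset.mem_powerset.1 hK)
      simp [hK'.1, hK'.2]
    · intro K _ hK
      rw [Finset.mem_powerset, Finset.subset_inter_iff, not_and_or] at hK
      rcases hK with hK | hK <;> simp [hK]
  have h2 : ∑ m ∈ Finset.range ((A ∩ B).card + 1),
      (A ∩ B).card.choose m • (if m < p then (-1 : R) ^ m else 0) =
      ∑ m ∈ Finset.range p, (-1 : R) ^ m * (A ∩ B).card.choose m := by
    simp only [smul_ite, smul_zero, nsmul_eq_mul']
    rw [← Finset.sum_filter]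
    refine Finset.sum_subset (fun m hm => by simpa using (Finset.mem_filter.1 hm).2) ?_
    intro m hm hm'
    rw [Nat.choose_eq_zero_of_lt, Nat.cast_zero, mul_zero]
    by_contra hlt
    exact hm' (Finset.mem_filter.2 ⟨Finset.mem_range.2 (by omega), Finset.mem_range.1 hm⟩)
  rw [h1, Finset.sum_powerset_apply_card (fun m => if m < p then (-1 : R) ^ m else 0), h2]
  obtain ⟨k, hk⟩ := Nat.exists_eq_add_of_le' hAB
  obtain ⟨q, rfl⟩ := Nat.exists_eq_add_of_le' hp
  have h3 := congrArg (Int.cast : ℤ → R) (Int.alternating_sum_range_choose_eq_choose (n := k) (m := q))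
  push_cast at h3
  simpa [hk] using h3

theorem card_subtype_card_lt (n p : ℕ) :
    Fintype.card {K : Finset (Fin n) // K.card < p} = ∑ i ∈ Finset.range p, n.choose i := by
  rw [Fintype.card_subtype, Finset.card_eq_sum_card_fiberwise (f := Finset.card)
    (t := Finset.range p) (fun K hK => by simpa using hK)]
  refine Finset.sum_congr rfl fun i hi => ?_
  have h : (Finset.univ.filter fun K : Finset (Fin n) => K.card < p).filter
      (fun K => K.card = i) = Finset.powersetCard i Finset.univ := by
    ext K
    simp only [Finset.mem_filter, Finset.mem_univ, true_and, Finset.mem_powersetCard,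
      Finset.subset_univ, and_iff_right_iff_imp]
    rintro rfl
    exact Finset.mem_range.1 hi
  rw [h, Finset.card_powersetCard, Finset.card_univ, Fintype.card_fin]

/-- Sets of size `2p` in a ground set of size `n = 4p - 1` (there are none for other `n`). -/
abbrev HalfSet (p n : ℕ) : Type :=
  {A : Finset (Fin n) // A.card = 2 * p ∧ n = 4 * p - 1}

/-- The graph on the `2p`-subsets of a `(4p - 1)`-set, with two sets adjacent if they meet in
exactly `p` elements. -/
def halfSetGraph (p n : ℕ) : SimpleGraph (HalfSet p n) where
  Adj A B := A ≠ B ∧ (A.1 ∩ B.1).card = p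
  symm := ⟨fun A B h => ⟨h.1.symm, by rw [Finset.inter_comm]; exact h.2⟩⟩
  loopless := ⟨fun _ h => h.1 rfl⟩

theorem card_halfSet {p n : ℕ} (hn : n = 4 * p - 1) :
    Fintype.card (HalfSet p n) = n.choose (2 * p) := by
  have h : (Finset.univ.filter fun A : Finset (Fin n) => A.card = 2 * p ∧ n = 4 * p - 1) =
      Finset.powersetCard (2 * p) Finset.univ := by
    ext A
    simp [Finset.mem_powersetCard, hn]
  rw [Fintype.card_subtype, h, Finset.card_powersetCard, Finset.card_univ, Fintype.card_fin]

theorem HalfSet.card_inter_pos {p n : ℕ} (hp : 0 < p) (A B : HalfSet p n) :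
    0 < (A.1 ∩ B.1).card := by
  have h := Finset.card_union_add_card_inter A.1 B.1
  have hle : (A.1 ∪ B.1).card ≤ n := by simpa using Finset.card_le_univ (A.1 ∪ B.1)
  have hA := A.2
  have hB := B.2
  omega

theorem HalfSet.card_inter_lt {p n : ℕ} {A B : HalfSet p n} (h : A ≠ B) :
    (A.1 ∩ B.1).card < 2 * p := by
  by_contra! hle
  have hA : A.1 ∩ B.1 = A.1 :=
    Finset.eq_of_subset_of_card_le Finset.inter_subset_left (by rw [A.2.1]; exact hle)
  have hB : A.1 ∩ B.1 = B.1 :=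
    Finset.eq_of_subset_of_card_le Finset.inter_subset_right (by rw [B.2.1]; exact hle)
  exact h (Subtype.ext (hA.symm.trans hB))

theorem fracHaemers_halfSetGraph_le (p n : ℕ) [Fact p.Prime] :
    fracHaemers (ZMod p) (halfSetGraph p n) ≤ ∑ i ∈ Finset.range p, (n.choose i : ℝ) := by
  have hp : 0 < p := (Fact.out : p.Prime).pos
  have hdot : ∀ A B : HalfSet p n,
      (fun K : {K : Finset (Fin n) // K.card < p} =>
        if K.1 ⊆ A.1 then (-1 : ZMod p) ^ K.1.card else 0) ⬝ᵥ
        (fun K => if K.1 ⊆ B.1 then 1 else 0) =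
      (-1) ^ (p - 1) * (((A.1 ∩ B.1).card - 1).choose (p - 1) : ℕ) := fun A B =>
    sum_neg_one_pow_card_subset_inter hp _ A.1 B.1 (A.card_inter_pos hp B)
  have h := fracHaemers_le_card (halfSetGraph p n)
    (fun B (K : {K : Finset (Fin n) // K.card < p}) => if K.1 ⊆ B.1 then (1 : ZMod p) else 0)
    (fun A K => if K.1 ⊆ A.1 then (-1) ^ K.1.card else 0) ?_ ?_
  · rw [card_subtype_card_lt] at h
    exact_mod_cast h
  · intro A
    rw [hdot, Finset.inter_self, A.2.1]
    exact mul_ne_zero (pow_ne_zero _ (neg_ne_zero.2 one_ne_zero))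
      (choose_two_mul_prime_sub_one_ne_zero p)
  · intro A B hne hadj
    rw [hdot, choose_sub_one_prime_sub_one_eq_zero p _ (fun h => hadj ⟨hne.symm, h⟩)
      (HalfSet.card_inter_lt hne.symm) (A.card_inter_pos hp B), mul_zero]

/-- An orthonormal representation of `halfSetGraph p n` in dimension `n`. -/
noncomputable def halfSetVec (p n : ℕ) (A : HalfSet p n) (i : Fin n) : ℝ :=
  (if i ∈ A.1 then 1 / √(p : ℝ) else 0) - 1 / (2 * √(p : ℝ) - 1)

theorem halfSetVec_dotProduct {p n : ℕ} (hp : 0 < p) (A B : HalfSet p n) :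
    halfSetVec p n A ⬝ᵥ halfSetVec p n B = ((A.1 ∩ B.1).card : ℝ) / p - 1 := by
  have hexp : halfSetVec p n A ⬝ᵥ halfSetVec p n B =
      ∑ i, ((if i ∈ A.1 ∩ B.1 then (1 / √(p : ℝ)) ^ 2 else 0) -
        (if i ∈ A.1 then 1 / √(p : ℝ) * (1 / (2 * √(p : ℝ) - 1)) else 0) -
        (if i ∈ B.1 then 1 / √(p : ℝ) * (1 / (2 * √(p : ℝ) - 1)) else 0) +
        (1 / (2 * √(p : ℝ) - 1)) ^ 2) := by
    refine Finset.sum_congr rfl fun i _ => ?_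
    unfold halfSetVec
    generalize 1 / √(p : ℝ) = s
    generalize 1 / (2 * √(p : ℝ) - 1) = c
    by_cases hA : i ∈ A.1 <;> by_cases hB : i ∈ B.1 <;> simp [hA, hB] <;> ring
  have ht : 1 ≤ √(p : ℝ) := Real.one_le_sqrt.2 (by exact_mod_cast hp)
  have hsq : √(p : ℝ) ^ 2 = p := Real.sq_sqrt (by positivity)
  have hn : (n : ℝ) = 4 * √(p : ℝ) ^ 2 - 1 := by
    rw [hsq, A.2.2, Nat.cast_sub (by omega)]
    push_cast
    ring
  rw [hexp]
  simp only [Finset.sum_add_distrib, Finset.sum_sub_distrib, Finset.sum_ite_mem,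
    Finset.univ_inter, Finset.sum_const, A.2.1, B.2.1, Finset.card_univ, Fintype.card_fin,
    nsmul_eq_mul, hn]
  clear hexp hn
  push_cast
  generalize √(p : ℝ) = t at *
  rw [← hsq]
  have h1 : t ≠ 0 := by linarith
  have hc : 1 / (2 * t - 1) * (2 * t - 1) = 1 := one_div_mul_cancel (by linarith)
  generalize 1 / (2 * t - 1) = c at *
  field_simp
  linear_combination t ^ 2 * ((2 * t + 1) * c - 1) * hc

theorem cohom_halfSetGraph (p r : ℕ) (hp : 0 < p) :
    Cohom (bigSum (fun _ : Fin 1 => (⊥ : SimpleGraph (Σ d : Fin r, HalfSet p (d.1 + 1)))))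
      (bigSum fun d : Fin r => halfSetGraph p (d.1 + 1)) := by
  have hp' : (p : ℝ) ≠ 0 := by exact_mod_cast hp.ne'
  have hdot : ∀ (d : Fin r) (A B : HalfSet p (d.1 + 1)),
      star (fun i => (halfSetVec p (d.1 + 1) A i : ℂ)) ⬝ᵥ
        (fun i => (halfSetVec p (d.1 + 1) B i : ℂ)) =
      ((((A.1 ∩ B.1).card : ℝ) / p - 1 : ℝ) : ℂ) := by
    intro d A B
    rw [← halfSetVec_dotProduct hp A B]
    simp [dotProduct]
  refine cohom_bot_of_orthonormalRep _ (fun d A i => (halfSetVec p (d.1 + 1) A i : ℂ)) ?_ ?_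
  · intro d A
    rw [hdot, Finset.inter_self, A.2.1]
    push_cast
    rw [mul_div_cancel_right₀ _ (by exact_mod_cast hp')]
    norm_num
  · intro d A B hadj
    rw [hdot, hadj.2, div_self hp']
    simp

theorem choose_le_of_monotoneExt (p : ℕ) [Fact p.Prime] (α : ℝ)
    (hadm : MonotoneExt (fun (V : Type) (iV : Fintype V) (eV : DecidableEq V)
      (G : SimpleGraph V) => @fracHaemers (ZMod p) _ V iV eV G) α) :
    ((4 * p - 1).choose (2 * p) : ℝ) ≤
      (∑ i ∈ Finset.range p, ((4 * p - 1).choose i : ℝ)) * ((4 * p - 1 : ℕ) : ℝ) ^ α := by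
  have hp : 0 < p := (Fact.out : p.Prime).pos
  have hmono := hadm (4 * p - 1) 1 _ _ _ _ (cohom_halfSetGraph p (4 * p - 1) hp)
  rw [Fin.sum_univ_one] at hmono
  let last : Fin (4 * p - 1) := ⟨4 * p - 2, by omega⟩
  have hlast : last.1 + 1 = 4 * p - 1 := by
    simp only [last]
    omega
  have hcard : (4 * p - 1).choose (2 * p) ≤
      Fintype.card (Σ d : Fin (4 * p - 1), HalfSet p (d.1 + 1)) := by
    have h := (congrArg (Nat.choose · (2 * p)) hlast).symm.trans (card_halfSet hlast).symm
    rw [Fintype.card_sigma]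
    refine h.trans_le ?_
    exact Finset.single_le_sum (f := fun d : Fin (4 * p - 1) => Fintype.card (HalfSet p (d.1 + 1)))
      (fun _ _ => Nat.zero_le _) (Finset.mem_univ last)
  calc ((4 * p - 1).choose (2 * p) : ℝ)
      ≤ Fintype.card (Σ d : Fin (4 * p - 1), HalfSet p (d.1 + 1)) := by exact_mod_cast hcard
    _ ≤ fracHaemers (ZMod p) (⊥ : SimpleGraph (Σ d : Fin (4 * p - 1), HalfSet p (d.1 + 1))) :=
        card_le_fracHaemers_bot
    _ ≤ ∑ d : Fin (4 * p - 1), fracHaemers (ZMod p) (halfSetGraph p (d.1 + 1)) *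
          ((d.1 + 1 : ℕ) : ℝ) ^ α := by simpa using hmono
    _ ≤ ∑ d : Fin (4 * p - 1), if d = last then
          (∑ i ∈ Finset.range p, ((4 * p - 1).choose i : ℝ)) * ((4 * p - 1 : ℕ) : ℝ) ^ α
          else 0 := by
        refine Finset.sum_le_sum fun d _ => ?_
        have hpow : (0 : ℝ) ≤ ((d.1 + 1 : ℕ) : ℝ) ^ α := by positivity
        split_ifs with hd
        · have hd' : d.1 + 1 = 4 * p - 1 := by rw [hd, hlast]
          have h := mul_le_mul_of_nonneg_right (fracHaemers_halfSetGraph_le p (d.1 + 1)) hpow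
          rw [hd'] at h ⊢
          exact h
        · have : IsEmpty (HalfSet p (d.1 + 1)) :=
            ⟨fun A => hd (Fin.ext (by have := A.2.2; omega))⟩
          exact mul_nonpos_of_nonpos_of_nonneg (fracHaemers_nonpos_of_isEmpty _) hpow
    _ = _ := by simp

theorem fracHaemers_Fp_exponent_lower_bound
    (p : ℕ) [Fact p.Prime] (hodd : Odd p)
    (hHad : ∃ Hd : Matrix (Fin (4 * p)) (Fin (4 * p)) ℝ,
      (∀ i j, Hd i j = 1 ∨ Hd i j = -1) ∧ ∀ i j, i ≠ j → Hd i ⬝ᵥ Hd j = 0)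
    (α : ℝ)
    (hadm : MonotoneExt (fun (V : Type) (iV : Fintype V) (eV : DecidableEq V)
      (G : SimpleGraph V) => @fracHaemers (ZMod p) _ V iV eV G) α) :
    (Real.logb 2 ((4 * p - 1).choose (2 * p)) -
        Real.logb 2 (∑ i ∈ Finset.range p, ((4 * p - 1).choose i : ℝ)) -
        Real.logb 2 (4 * p - 1)) / Real.logb 2 (4 * p - 1) ≤ α := by
  have hp : 2 ≤ p := (Fact.out : p.Prime).two_le
  have hp' : (2 : ℝ) ≤ p := by exact_mod_cast hp
  have h := choose_le_of_monotoneExt p α hadm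
  have hcast : ((4 * p - 1 : ℕ) : ℝ) = 4 * p - 1 := by
    rw [Nat.cast_sub (by omega)]
    push_cast
    ring
  rw [hcast] at h
  have hC : (0 : ℝ) < (4 * p - 1).choose (2 * p) := by
    exact_mod_cast Nat.choose_pos (by omega)
  have hn : (0 : ℝ) < 4 * p - 1 := by linarith
  have hpow : (0 : ℝ) < (4 * p - 1 : ℝ) ^ α := Real.rpow_pos_of_pos hn α
  have hD : (0 : ℝ) < ∑ i ∈ Finset.range p, ((4 * p - 1).choose i : ℝ) :=
    pos_of_mul_pos_left (hC.trans_le h) hpow.le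
  have hlog : 0 < Real.logb 2 (4 * p - 1) := Real.logb_pos (by norm_num) (by linarith)
  have hle := Real.logb_le_logb_of_le (by norm_num : (1 : ℝ) < 2) hC h
  rw [Real.logb_mul hD.ne' hpow.ne', Real.logb_rpow_eq_mul_logb_of_pos hn] at hle
  rw [div_le_iff₀ hlog]
  linarith

end NCG
end

section
/- Let H_1, …, H_r be finite simple graphs, T = ⊕_{d=1}^r H̄_d ⊗ Q_d, and n ≥ 1 an integer. For each type Q with denominator n on {1,…,r} (i.e. a probability distribution Q on {1,…,r} with nQ(d) ∈ ℕ for every d), set M_Q = n!/∏_{d=1}^r (nQ(d))! (the size of the type class) and T_Q = (K̄_{M_Q} ⊠ H_1^{⊠nQ(1)} ⊠ ⋯ ⊠ H_r^{⊠nQ(r)})‾ ⊗ Q_{∏_{d=1}^r d^{nQ(d)}}. Then the n-fold tensor power T^{⊗n} is isomorphic as a noncommutative graph to the direct sum ⊕_Q T_Q over all types Q with denominator n. -/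
open scoped Kronecker
open Matrix

namespace NCG

/-- `n`-fold tensor power of a noncommutative graph. -/
noncomputable def ncPow {A : Type} [Fintype A] [DecidableEq A]
    (T : Submodule ℂ (Matrix A A ℂ)) (n : ℕ) :
    Submodule ℂ (Matrix (Fin n → A) (Fin n → A) ℂ) :=
  Submodule.span ℂ {M | ∃ B : Fin n → Matrix A A ℂ, (∀ i, B i ∈ T) ∧
    M = Matrix.of fun x y => ∏ i, B i (x i) (y i)}

/-- Isomorphism of noncommutative graphs: a unitary intertwining the two operator systems. -/
def NCIso {A B : Type} [Fintype A] [DecidableEq A] [Fintype B] [DecidableEq B]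
    (S : Submodule ℂ (Matrix A A ℂ)) (T : Submodule ℂ (Matrix B B ℂ)) : Prop :=
  ∃ U : Matrix B A ℂ, Uᴴ * U = 1 ∧ U * Uᴴ = 1 ∧ ∀ M, M ∈ S ↔ U * M * Uᴴ ∈ T

/-- The strong product `K̄_M ⊠ H_1^{⊠ Q 1} ⊠ ⋯ ⊠ H_r^{⊠ Q r}` of an edgeless graph on `M`
vertices with strong powers of the members of a family of graphs. -/
def typeClassGraph {r : ℕ} {W : Fin r → Type} (H : ∀ d, SimpleGraph (W d))
    (Q : Fin r → ℕ) (M : ℕ) :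
    SimpleGraph (Fin M × ∀ d, Fin (Q d) → W d) where
  Adj p q := p ≠ q ∧ p.1 = q.1 ∧
    ∀ d i, (H d).Adj (p.2 d i) (q.2 d i) ∨ p.2 d i = q.2 d i
  symm := by
    constructor
    rintro p q ⟨hne, h1, h2⟩
    exact ⟨hne.symm, h1.symm,
      fun d i => (h2 d i).imp (fun h => h.symm) (fun h => h.symm)⟩
  loopless := ⟨fun p h => h.1 rfl⟩

open Classical in
/-- The matrices supported on a relation `Rel` whose entry at `(a, b)` depends only on the labels
`π a` and `π b`. -/
def labelled {A X : Type} (π : A → X) (Rel : A → A → Prop) : Submodule ℂ (Matrix A A ℂ) where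
  carrier := {M | ∃ C : X → X → ℂ, ∀ a b, M a b = if Rel a b then C (π a) (π b) else 0}
  add_mem' := by
    rintro M N ⟨C, hC⟩ ⟨D, hD⟩
    refine ⟨C + D, fun a b => ?_⟩
    rw [Matrix.add_apply, hC, hD]
    split_ifs <;> simp
  zero_mem' := ⟨0, fun a b => by simp⟩
  smul_mem' := by
    rintro c M ⟨C, hC⟩
    refine ⟨c • C, fun a b => ?_⟩
    rw [Matrix.smul_apply, hC]
    split_ifs <;> simp

open Classical in
theorem mem_labelled {A X : Type} {π : A → X} {Rel : A → A → Prop} {M : Matrix A A ℂ} :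
    M ∈ labelled π Rel ↔
      ∃ C : X → X → ℂ, ∀ a b, M a b = if Rel a b then C (π a) (π b) else 0 :=
  Iff.rfl

open Classical in
/-- The indicator matrix of the related pairs with labels `x` and `y`. -/
noncomputable def labelUnit {A X : Type} (π : A → X) (Rel : A → A → Prop) (x y : X) :
    Matrix A A ℂ :=
  Matrix.of fun a b => if Rel a b ∧ π a = x ∧ π b = y then 1 else 0

theorem labelUnit_mem_labelled {A X : Type} (π : A → X) (Rel : A → A → Prop) (x y : X) :
    labelUnit π Rel x y ∈ labelled π Rel := by
  classical
  refine mem_labelled.2 ⟨fun x' y' => if x' = x ∧ y' = y then 1 else 0, fun a b => ?_⟩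
  simp only [labelUnit, Matrix.of_apply, ite_and]

theorem labelled_le {A X : Type} [Fintype X] {π : A → X} {Rel : A → A → Prop}
    {S : Submodule ℂ (Matrix A A ℂ)} (h : ∀ x y, labelUnit π Rel x y ∈ S) :
    labelled π Rel ≤ S := by
  classical
  intro M hM
  obtain ⟨C, hC⟩ := mem_labelled.1 hM
  have hsum : M = ∑ x, ∑ y, C x y • labelUnit π Rel x y := by
    ext a b
    rw [hC]
    simp only [Matrix.sum_apply, Matrix.smul_apply, labelUnit, Matrix.of_apply, smul_eq_mul,
      mul_ite, mul_one, mul_zero]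
    by_cases hab : Rel a b <;> simp [hab, ite_and]
  rw [hsum]
  exact Submodule.sum_mem _ fun x _ => Submodule.sum_mem _ fun y _ => S.smul_mem _ (h x y)

theorem ncPow_labelled {A X : Type} [Fintype A] [DecidableEq A] [Fintype X]
    (π : A → X) (Rel : A → A → Prop) (n : ℕ) :
    ncPow (labelled π Rel) n =
      labelled (fun (a : Fin n → A) i => π (a i)) (fun a b => ∀ i, Rel (a i) (b i)) := by
  classical
  apply le_antisymm
  · refine Submodule.span_le.2 ?_
    rintro M ⟨B, hB, rfl⟩
    choose C hC using fun i => mem_labelled.1 (hB i)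
    refine mem_labelled.2 ⟨fun x y => ∏ i, C i (x i) (y i), fun a b => ?_⟩
    simp only [Matrix.of_apply, hC]
    split_ifs with h
    · exact Finset.prod_congr rfl fun i _ => if_pos (h i)
    · push Not at h
      obtain ⟨i, hi⟩ := h
      exact Finset.prod_eq_zero (Finset.mem_univ i) (if_neg hi)
  · refine labelled_le fun x y => Submodule.subset_span
      ⟨fun i => labelUnit π Rel (x i) (y i), fun i => labelUnit_mem_labelled _ _ _ _, ?_⟩
    ext a b
    simp only [labelUnit, Matrix.of_apply, Finset.prod_ite_zero, Finset.prod_const_one,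
      Finset.mem_univ, true_imp_iff, forall_and, funext_iff]

theorem ncIso_labelled {A B X Y : Type} [Fintype A] [DecidableEq A] [Fintype B] [DecidableEq B]
    {π : A → X} {Rel : A → A → Prop} {ρ : B → Y} {Rel' : B → B → Prop} (e : B ≃ A)
    (f : Y → X) (hf : Function.Injective f) (hπ : ∀ b, π (e b) = f (ρ b))
    (hRel : ∀ b b', Rel (e b) (e b') ↔ Rel' b b') :
    NCIso (labelled π Rel) (labelled ρ Rel') := by
  classical
  let U : Matrix B A ℂ := (1 : Matrix A A ℂ).submatrix e id
  have hUH : Uᴴ = (1 : Matrix A A ℂ).submatrix id e := by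
    simp [U, Matrix.conjTranspose_submatrix]
  refine ⟨U, ?_, ?_, fun M => ?_⟩
  · rw [hUH, Matrix.submatrix_mul_equiv]
    simp
  · rw [hUH, ← Matrix.submatrix_mul _ _ _ _ _ Function.bijective_id]
    simp
  · have hU : U * M * Uᴴ = M.submatrix e e := by
      rw [hUH]
      ext b b'
      simp [U, Matrix.mul_apply, Matrix.one_apply]
    rw [hU, mem_labelled, mem_labelled]
    constructor
    · rintro ⟨C, hC⟩
      refine ⟨fun y y' => C (f y) (f y'), fun b b' => ?_⟩
      simp only [Matrix.submatrix_apply, hC, hRel, hπ]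
    · rintro ⟨C, hC⟩
      refine ⟨fun x x' =>
        Function.extend (Prod.map f f) (fun p : Y × Y => C p.1 p.2) 0 (x, x'), fun a a' => ?_⟩
      obtain ⟨b, rfl⟩ := e.surjective a
      obtain ⟨b', rfl⟩ := e.surjective a'
      have hext := (hf.prodMap hf).extend_apply (fun p : Y × Y => C p.1 p.2) 0 (ρ b, ρ b')
      simp only [Prod.map_apply] at hext
      simp only [hπ, hext, hRel]
      exact hC b b'

theorem apply_eq_zero_of_mem_graphNC {V : Type} [Fintype V] [DecidableEq V] {G : SimpleGraph V}
    {M : Matrix V V ℂ} (hM : M ∈ graphNC G) {x y : V} (h : ¬(G.Adj x y ∨ x = y)) :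
    M x y = 0 := by
  induction hM using Submodule.span_induction with
  | mem N hN =>
    obtain ⟨v, w, hvw, rfl⟩ := hN
    refine Matrix.single_apply_of_ne _ _ _ _ _ ?_
    rintro ⟨rfl, rfl⟩
    exact h hvw
  | zero => rfl
  | add N N' _ _ hN hN' => rw [Matrix.add_apply, hN, hN', add_zero]
  | smul c N _ hN => rw [Matrix.smul_apply, hN, smul_zero]

theorem ncTensor_graphNC_qGraph {V : Type} [Fintype V] [DecidableEq V] (G : SimpleGraph V)
    (d : ℕ) :
    ncTensor (graphNC G) (qGraph d) =
      labelled Prod.fst fun p q => (G.Adj p.1 q.1 ∨ p.1 = q.1) ∧ p.2 = q.2 := by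
  classical
  apply le_antisymm
  · refine Submodule.span_le.2 ?_
    rintro M ⟨X, hX, Y, hY, rfl⟩
    obtain ⟨c, rfl⟩ := Submodule.mem_span_singleton.1 hY
    refine mem_labelled.2 ⟨fun x y => c * X x y, ?_⟩
    rintro ⟨x, k⟩ ⟨y, l⟩
    rw [Matrix.kronecker_apply, Matrix.smul_apply, Matrix.one_apply, smul_eq_mul]
    by_cases hxy : G.Adj x y ∨ x = y
    · by_cases hkl : k = l <;> simp [hxy, hkl, mul_comm]
    · simp [hxy, apply_eq_zero_of_mem_graphNC hX hxy]
  · refine labelled_le fun x y => ?_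
    by_cases hxy : G.Adj x y ∨ x = y
    · refine Submodule.subset_span ⟨Matrix.single x y 1, Submodule.subset_span ⟨x, y, hxy, rfl⟩, 1,
        Submodule.mem_span_singleton_self _, ?_⟩
      ext ⟨v, k⟩ ⟨w, l⟩
      simp only [labelUnit, Matrix.of_apply, Matrix.kronecker_apply, Matrix.single_apply,
        Matrix.one_apply]
      grind
    · convert Submodule.zero_mem _
      ext ⟨v, k⟩ ⟨w, l⟩
      simp only [labelUnit, Matrix.of_apply, Matrix.zero_apply]
      grind

/-- Two basis labels of a direct sum of graphs tensored with `Q_{D i}` are related when they lie in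
the same summand, have adjacent or equal vertices, and have the same quantum coordinate. -/
def SumRel {ι : Type} {V : ι → Type} (G : ∀ i, SimpleGraph (V i)) (D : ι → ℕ)
    (p q : Σ i, V i × Fin (D i)) : Prop :=
  ∃ i v w k, p = ⟨i, v, k⟩ ∧ q = ⟨i, w, k⟩ ∧ ((G i).Adj v w ∨ v = w)

theorem sumRel_mk {ι : Type} {V : ι → Type} {G : ∀ i, SimpleGraph (V i)} {D : ι → ℕ} {i : ι}
    {p q : V i × Fin (D i)} :
    SumRel G D ⟨i, p⟩ ⟨i, q⟩ ↔ ((G i).Adj p.1 q.1 ∨ p.1 = q.1) ∧ p.2 = q.2 := by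
  constructor
  · rintro ⟨j, v, w, k, hp, hq, h⟩
    cases hp
    cases hq
    exact ⟨h, rfl⟩
  · obtain ⟨v, k⟩ := p
    obtain ⟨w, l⟩ := q
    rintro ⟨h, rfl⟩
    exact ⟨i, v, w, k, rfl, rfl, h⟩

theorem ncDirectSum_graphNC_qGraph {ι : Type} [Fintype ι] [DecidableEq ι] {V : ι → Type}
    [∀ i, Fintype (V i)] [∀ i, DecidableEq (V i)] (G : ∀ i, SimpleGraph (V i)) (D : ι → ℕ) :
    ncDirectSum (fun i => ncTensor (graphNC (G i)) (qGraph (D i))) =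
      labelled (fun p => (⟨p.1, p.2.1⟩ : Σ i, V i)) (SumRel G D) := by
  classical
  ext M
  constructor
  · rintro ⟨hoff, hdiag⟩
    simp only [ncTensor_graphNC_qGraph, mem_labelled, Matrix.of_apply] at hdiag
    choose C hC using hdiag
    refine mem_labelled.2
      ⟨fun x y => if h : y.1 = x.1 then C x.1 x.2 (h ▸ y.2) else 0, ?_⟩
    rintro ⟨i, p⟩ ⟨j, q⟩
    by_cases hij : i = j
    · subst hij
      simp only [hC, sumRel_mk, dite_true]
      congr
    · rw [hoff _ _ hij, if_neg]
      rintro ⟨_, _, _, _, hp, hq, _⟩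
      exact hij ((congrArg Sigma.fst hp).trans (congrArg Sigma.fst hq).symm)
  · intro hM
    obtain ⟨C, hC⟩ := mem_labelled.1 hM
    refine ⟨fun p q hpq => ?_, fun i => ?_⟩
    · rw [hC, if_neg]
      rintro ⟨_, _, _, _, rfl, rfl, _⟩
      exact hpq rfl
    · simp only [ncTensor_graphNC_qGraph, mem_labelled]
      refine ⟨fun v w => C ⟨i, v⟩ ⟨i, w⟩, fun p q => ?_⟩
      simp only [Matrix.of_apply, hC, sumRel_mk]

/-- The sequences in which each letter `d` occurs exactly `Q d` times. -/
abbrev TypeClass {r : ℕ} (n : ℕ) (Q : Fin r → ℕ) : Type :=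
  {t : Fin n → Fin r // ∃ σ : Fin n ≃ Σ d, Fin (Q d), ∀ i, (σ i).1 = t i}

theorem card_equiv_over {r n : ℕ} {Q : Fin r → ℕ} (t : TypeClass n Q) :
    Nat.card {σ : Fin n ≃ Σ d, Fin (Q d) // ∀ i, (σ i).1 = t.1 i} = ∏ d, (Q d).factorial := by
  classical
  obtain ⟨t, σ₀, hσ₀⟩ := t
  let φ : {σ : Fin n ≃ Σ d, Fin (Q d) // ∀ i, (σ i).1 = t i} ≃
      {g : Equiv.Perm (Σ d, Fin (Q d)) // Sigma.fst ∘ g = Sigma.fst} :=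
    (Equiv.equivCongr σ₀ (Equiv.refl _)).subtypeEquiv fun σ => by
      rw [funext_iff, σ₀.symm.forall_congr_left]
      simp [hσ₀]
  rw [Nat.card_congr φ, Nat.card_eq_fintype_card, DomMulAct.stabilizer_card]
  refine Finset.prod_congr rfl fun d _ => ?_
  rw [Fintype.card_congr (Equiv.sigmaSubtype d), Fintype.card_fin]

theorem card_typeClass {r n : ℕ} {Q : Fin r → ℕ} (hQ : ∑ d, Q d = n) :
    Nat.card (TypeClass n Q) = n.factorial / ∏ d, (Q d).factorial := by
  classical
  have : Fintype (TypeClass n Q) := Fintype.ofFinite _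
  let φ : (Fin n ≃ Σ d, Fin (Q d)) ≃
      Σ t : TypeClass n Q, {σ : Fin n ≃ Σ d, Fin (Q d) // ∀ i, (σ i).1 = t.1 i} :=
    { toFun := fun σ => ⟨⟨fun i => (σ i).1, σ, fun _ => rfl⟩, σ, fun _ => rfl⟩
      invFun := fun p => p.2.1
      left_inv := fun _ => rfl
      right_inv := by
        rintro ⟨⟨t, ht⟩, σ, hσ⟩
        obtain rfl : (fun i => (σ i).1) = t := funext hσ
        rfl }
  have hcard : Fintype.card (Fin n) = Fintype.card (Σ d, Fin (Q d)) := by simp [hQ]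
  have h := Nat.card_congr φ
  rw [Nat.card_sigma, Nat.card_eq_fintype_card,
    Fintype.card_equiv (Fintype.equivOfCardEq hcard), Fintype.card_fin] at h
  simp only [card_equiv_over, Finset.sum_const, Finset.card_univ, smul_eq_mul] at h
  rw [h, Nat.mul_div_cancel _ (Finset.prod_pos fun d _ => Nat.factorial_pos _),
    Nat.card_eq_fintype_card]

/-- The types with denominator `n` on `Fin r`, recorded by their numerators. -/
abbrev NType (r n : ℕ) : Type :=
  {Q : Fin r → Fin (n + 1) // ∑ d, (Q d : ℕ) = n}

theorem NType.eq_of_typeClass {r n : ℕ} {Q Q' : NType r n} {t : Fin n → Fin r}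
    (h : ∃ σ : Fin n ≃ Σ d, Fin (Q.1 d), ∀ i, (σ i).1 = t i)
    (h' : ∃ σ : Fin n ≃ Σ d, Fin (Q'.1 d), ∀ i, (σ i).1 = t i) : Q = Q' := by
  obtain ⟨σ, hσ⟩ := h
  obtain ⟨τ, hτ⟩ := h'
  refine Subtype.ext (funext fun d => Fin.ext ?_)
  have e : {p : Σ d, Fin (Q.1 d) // p.1 = d} ≃ {p : Σ d, Fin (Q'.1 d) // p.1 = d} :=
    (σ.symm.trans τ).subtypeEquiv fun p => by simp [hτ, ← hσ]
  simpa using Nat.card_congr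
    ((Equiv.sigmaSubtype d).symm.trans (e.trans (Equiv.sigmaSubtype d)))

theorem NType.exists_typeClass {r n : ℕ} (t : Fin n → Fin r) :
    ∃ Q : NType r n, ∃ σ : Fin n ≃ Σ d, Fin (Q.1 d), ∀ i, (σ i).1 = t i := by
  classical
  have hsum : ∑ d, Fintype.card {i // t i = d} = n := by
    rw [← Fintype.card_sigma, Fintype.card_congr (Equiv.sigmaFiberEquiv t), Fintype.card_fin]
  have hlt (d : Fin r) : Fintype.card {i // t i = d} < n + 1 :=
    Nat.lt_succ_of_le ((Fintype.card_subtype_le _).trans_eq (Fintype.card_fin n))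
  exact ⟨⟨fun d => ⟨_, hlt d⟩, hsum⟩, (Equiv.sigmaFiberEquiv t).symm.trans
    (Equiv.sigmaCongrRight fun d => Fintype.equivFin _), fun i => rfl⟩

/-- There are slot assignments, indexed by a type `Q` and a number below the size of its type
class, realising every sequence exactly once. -/
theorem exists_slot_assignment (r n : ℕ) :
    ∃ σ : ∀ Q : NType r n,
        Fin (n.factorial / ∏ d, (Q.1 d : ℕ).factorial) → (Fin n ≃ Σ d, Fin (Q.1 d)),
      (∀ Q m Q' m', (∀ i, (σ Q m i).1 = (σ Q' m' i).1) →
        (⟨Q, m⟩ : Σ Q : NType r n, Fin (n.factorial / ∏ d, (Q.1 d : ℕ).factorial)) = ⟨Q', m'⟩) ∧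
      ∀ t : Fin n → Fin r, ∃ Q m, ∀ i, (σ Q m i).1 = t i := by
  have hτ (Q : NType r n) : Nonempty
      (Fin (n.factorial / ∏ d, (Q.1 d : ℕ).factorial) ≃ TypeClass n fun d => (Q.1 d : ℕ)) :=
    ⟨((Finite.equivFin _).trans (finCongr (card_typeClass Q.2))).symm⟩
  let τ := fun Q => (hτ Q).some
  choose σ hσ using fun Q m => (τ Q m).2
  refine ⟨σ, fun Q m Q' m' h => ?_, fun t => ?_⟩
  · obtain rfl : Q = Q' :=
      NType.eq_of_typeClass ⟨σ Q m, fun i => h i⟩ ⟨σ Q' m', fun i => rfl⟩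
    congr 1
    refine (τ Q).injective (Subtype.ext (funext fun i => ?_))
    rw [← hσ, ← hσ, h]
  · obtain ⟨Q, hQ⟩ := NType.exists_typeClass t
    refine ⟨Q, (τ Q).symm ⟨t, hQ⟩, fun i => ?_⟩
    rw [hσ, Equiv.apply_symm_apply]

set_option synthInstance.maxHeartbeats 1000000 in
set_option synthInstance.maxSize 512 in
theorem tensor_power_type_decomposition
    {r : ℕ} {W : Fin r → Type} [∀ d, Fintype (W d)] [∀ d, DecidableEq (W d)]
    (H : ∀ d, SimpleGraph (W d)) (n : ℕ) (hn : 1 ≤ n) :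
    NCIso (ncPow (bigSum H) n)
      (ncDirectSum fun Q : {Q : Fin r → Fin (n + 1) // ∑ d, (Q d : ℕ) = n} =>
        ncTensor
          (graphNC (typeClassGraph H (fun d => (Q.1 d : ℕ))
            (n.factorial / ∏ d, ((Q.1 d : ℕ)).factorial)))
          (qGraph (∏ d, (d.1 + 1) ^ (Q.1 d : ℕ)))) := by
  classical
  obtain ⟨σ, hσinj, hσsurj⟩ := exists_slot_assignment r n
  have hc (Q : NType r n) : Nonempty
      (Fin (∏ d : Fin r, (d.1 + 1) ^ (Q.1 d : ℕ)) ≃ ∀ d : Fin r, Fin (Q.1 d) → Fin (d.1 + 1)) :=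
    ⟨Fintype.equivOfCardEq (by simp)⟩
  let c := fun Q => (hc Q).some
  let f : (Σ Q : NType r n, Fin (n.factorial / ∏ d, (Q.1 d : ℕ).factorial) ×
      ∀ d, Fin (Q.1 d) → W d) → Fin n → Σ d, W d :=
    fun x i => ⟨(σ x.1 x.2.1 i).1, x.2.2 _ (σ x.1 x.2.1 i).2⟩
  let g : (Σ Q : NType r n, (Fin (n.factorial / ∏ d, (Q.1 d : ℕ).factorial) ×
      ∀ d, Fin (Q.1 d) → W d) × Fin (∏ d : Fin r, (d.1 + 1) ^ (Q.1 d : ℕ))) →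
      Fin n → Σ d : Fin r, W d × Fin (d.1 + 1) :=
    fun x i => ⟨(σ x.1 x.2.1.1 i).1, x.2.1.2 _ (σ x.1 x.2.1.1 i).2,
      c x.1 x.2.2 _ (σ x.1 x.2.1.1 i).2⟩
  have hf : Function.Injective f := by
    rintro ⟨Q, m, w⟩ ⟨Q', m', w'⟩ h
    have hi := fun i => Sigma.mk.inj (congrFun h i)
    have hQm := hσinj Q m Q' m' fun i => (hi i).1
    cases hQm
    have hw : w = w' := by
      funext d j
      have := eq_of_heq (hi ((σ Q m).symm ⟨d, j⟩)).2
      dsimp only at this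
      rwa [Equiv.apply_symm_apply] at this
    rw [hw]
  have hRel (x y) : (∀ i, SumRel H (fun d : Fin r => d.1 + 1) (g x i) (g y i)) ↔
      SumRel (fun Q : NType r n => typeClassGraph H (fun d => (Q.1 d : ℕ))
        (n.factorial / ∏ d, ((Q.1 d : ℕ)).factorial))
        (fun Q => ∏ d : Fin r, (d.1 + 1) ^ (Q.1 d : ℕ)) x y := by
    obtain ⟨Q, ⟨m, w⟩, k⟩ := x
    obtain ⟨Q', ⟨m', w'⟩, k'⟩ := y
    constructor
    · intro h
      have hQm := hσinj Q m Q' m' fun i => by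
        obtain ⟨_, _, _, _, hx, hy, _⟩ := h i
        exact (congrArg Sigma.fst hx).trans (congrArg Sigma.fst hy).symm
      cases hQm
      have hi := fun i => sumRel_mk.1 (h i)
      refine sumRel_mk.2 ⟨?_, (c Q).injective (funext fun d => funext fun j => ?_)⟩
      · by_cases hw : w = w'
        · exact Or.inr (by rw [hw])
        · refine Or.inl ⟨fun h => hw (congrArg Prod.snd h), rfl, fun d j => ?_⟩
          have := (hi ((σ Q m).symm ⟨d, j⟩)).1
          rwa [Equiv.apply_symm_apply] at this
      · have := (hi ((σ Q m).symm ⟨d, j⟩)).2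
        dsimp only at this
        rwa [Equiv.apply_symm_apply] at this
    · rintro ⟨_, _, _, _, hx, hy, h⟩ i
      cases hx
      cases hy
      rcases h with ⟨-, hm, h⟩ | h
      · cases hm
        exact sumRel_mk.2 ⟨h _ _, rfl⟩
      · cases h
        exact sumRel_mk.2 ⟨Or.inr rfl, rfl⟩
  have hg : Function.Bijective g := by
    constructor
    · rintro ⟨Q, ⟨m, w⟩, k⟩ ⟨Q', ⟨m', w'⟩, k'⟩ h
      have hi := fun i => Sigma.mk.inj (congrFun h i)
      have hQm := hσinj Q m Q' m' fun i => (hi i).1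
      cases hQm
      have hwk (d j) : (w d j, c Q k d j) = (w' d j, c Q k' d j) := by
        have := eq_of_heq (hi ((σ Q m).symm ⟨d, j⟩)).2
        dsimp only at this
        rwa [Equiv.apply_symm_apply] at this
      have hw : w = w' := funext fun d => funext fun j => congrArg Prod.fst (hwk d j)
      have hk : k = k' := (c Q).injective
        (funext fun d => funext fun j => congrArg Prod.snd (hwk d j))
      rw [hw, hk]
    · intro x
      obtain ⟨Q, m, hQm⟩ := hσsurj fun i => (x i).1
      have hx (d) (j : Fin (Q.1 d)) : ∃ v : W d × Fin (d.1 + 1),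
          x ((σ Q m).symm ⟨d, j⟩) = ⟨d, v⟩ := by
        have h := hQm ((σ Q m).symm ⟨d, j⟩)
        rw [Equiv.apply_symm_apply] at h
        generalize x ((σ Q m).symm ⟨d, j⟩) = z at h
        obtain ⟨d', v⟩ := z
        cases h
        exact ⟨v, rfl⟩
      choose v hv using hx
      refine ⟨⟨Q, (m, fun d j => (v d j).1), (c Q).symm fun d j => (v d j).2⟩,
        funext fun i => ?_⟩
      simp only [g, Equiv.apply_symm_apply]
      have h := hv (σ Q m i).1 (σ Q m i).2
      rw [Sigma.eta, Equiv.symm_apply_apply] at h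
      rw [h]
  rw [bigSum, ncDirectSum_graphNC_qGraph, ncPow_labelled, ncDirectSum_graphNC_qGraph]
  exact ncIso_labelled (Equiv.ofBijective g hg) f hf (fun _ => rfl) hRel

end NCG
end

section
/- Let F be a real-valued, isomorphism-invariant function on noncommutative graphs of the form ⊕_{d=1}^r Ḡ_d ⊗ Q_d (G_1,…,G_r finite simple graphs) satisfying F(S ⊕ T) = F(S) + F(T), F(S ⊗ T) = F(S)·F(T), F(Q_1) = 1, and F(T) ≤ F(S) whenever T ≤ S, for all noncommutative graphs S, T of this form. Then α := log₂ F(Q_2) satisfies α ≥ 1, F(Q_d) = d^α for every d ≥ 1, and F(⊕_{d=1}^r Ḡ_d ⊗ Q_d) = ∑_{d=1}^r F(Ḡ_d)·d^α for all finite simple graphs G_1, …, G_r. -/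
open scoped Kronecker
open Matrix

namespace NCG

/-- Binary direct sum of noncommutative graphs. -/
noncomputable def ncDirectSum₂ {A B : Type} [Fintype A] [DecidableEq A]
    [Fintype B] [DecidableEq B]
    (S : Submodule ℂ (Matrix A A ℂ)) (T : Submodule ℂ (Matrix B B ℂ)) :
    Submodule ℂ (Matrix (A ⊕ B) (A ⊕ B) ℂ) where
  carrier := {M | (Matrix.of fun x y : A => M (Sum.inl x) (Sum.inl y)) ∈ S ∧
    (Matrix.of fun x y : B => M (Sum.inr x) (Sum.inr y)) ∈ T ∧
    (∀ x y, M (Sum.inl x) (Sum.inr y) = 0) ∧ ∀ x y, M (Sum.inr x) (Sum.inl y) = 0}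
  add_mem' := by
    rintro a b ⟨ha1, ha2, ha3, ha4⟩ ⟨hb1, hb2, hb3, hb4⟩
    refine ⟨?_, ?_, fun x y => ?_, fun x y => ?_⟩
    · have h := S.add_mem ha1 hb1; exact h
    · have h := T.add_mem ha2 hb2; exact h
    · simp [Matrix.add_apply, ha3 x y, hb3 x y]
    · simp [Matrix.add_apply, ha4 x y, hb4 x y]
  zero_mem' := by
    refine ⟨?_, ?_, fun x y => rfl, fun x y => rfl⟩
    · exact S.zero_mem
    · exact T.zero_mem
  smul_mem' := by
    rintro c a ⟨ha1, ha2, ha3, ha4⟩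
    refine ⟨?_, ?_, fun x y => ?_, fun x y => ?_⟩
    · have h := S.smul_mem c ha1; exact h
    · have h := T.smul_mem c ha2; exact h
    · simp [Matrix.smul_apply, ha3 x y]
    · simp [Matrix.smul_apply, ha4 x y]

/-- A noncommutative graph is (up to isomorphism) of the form `⊕_{d=1}^r Ḡ_d ⊗ Q_d`. -/
def InClass {A : Type} [Fintype A] [DecidableEq A] (S : Submodule ℂ (Matrix A A ℂ)) : Prop :=
  ∃ (r : ℕ) (m : Fin r → ℕ) (G : ∀ d, SimpleGraph (Fin (m d))), NCIso S (bigSum G)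

section Isomorphisms

variable {A B C : Type} [Fintype A] [DecidableEq A] [Fintype B] [DecidableEq B]
  [Fintype C] [DecidableEq C]

lemma NCIso.refl (S : Submodule ℂ (Matrix A A ℂ)) : NCIso S S :=
  ⟨1, by simp, by simp, by simp⟩

lemma NCIso.trans {S : Submodule ℂ (Matrix A A ℂ)} {T : Submodule ℂ (Matrix B B ℂ)}
    {R : Submodule ℂ (Matrix C C ℂ)} (hST : NCIso S T) (hTR : NCIso T R) : NCIso S R := by
  obtain ⟨U, hU, hU', hM⟩ := hST
  obtain ⟨W, hW, hW', hN⟩ := hTR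
  refine ⟨W * U, ?_, ?_, fun M => ?_⟩
  · rw [conjTranspose_mul, Matrix.mul_assoc, ← Matrix.mul_assoc Wᴴ, hW, Matrix.one_mul, hU]
  · rw [conjTranspose_mul, Matrix.mul_assoc, ← Matrix.mul_assoc U, hU', Matrix.one_mul, hW']
  · rw [hM, hN, conjTranspose_mul]
    simp only [Matrix.mul_assoc]

/-- A relabelling of the basis that matches two noncommutative graphs is an isomorphism. -/
lemma NCIso.of_equiv {S : Submodule ℂ (Matrix A A ℂ)} {T : Submodule ℂ (Matrix B B ℂ)}
    (e : A ≃ B) (h : ∀ N : Matrix B B ℂ, N ∈ T ↔ N.submatrix e e ∈ S) : NCIso S T := by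
  have key : ∀ M : Matrix A A ℂ, (1 : Matrix B B ℂ).submatrix id e * M *
      ((1 : Matrix B B ℂ).submatrix id e)ᴴ = M.submatrix e.symm e.symm := by
    intro M
    ext x y
    obtain ⟨a, rfl⟩ := e.surjective x
    obtain ⟨b, rfl⟩ := e.surjective y
    simp [Matrix.mul_apply, Matrix.one_apply]
  refine ⟨(1 : Matrix B B ℂ).submatrix id e, ?_, ?_, fun M => ?_⟩
  · ext x y
    simp [Matrix.mul_apply, Matrix.one_apply, eq_comm]
  · simpa only [Matrix.mul_one, submatrix_one_equiv] using key 1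
  · rw [key, h]
    simp

lemma InClass.of_iso {S : Submodule ℂ (Matrix A A ℂ)} {T : Submodule ℂ (Matrix B B ℂ)}
    (h : NCIso S T) (hT : InClass T) : InClass S := by
  obtain ⟨r, m, G, hG⟩ := hT
  exact ⟨r, m, G, h.trans hG⟩

end Isomorphisms

section Membership

lemma mem_graphNC {V : Type} [Fintype V] [DecidableEq V] (G : SimpleGraph V)
    (M : Matrix V V ℂ) :
    M ∈ graphNC G ↔ ∀ x y, ¬ (G.Adj x y ∨ x = y) → M x y = 0 := by
  constructor
  · intro hM x y hxy
    induction hM using Submodule.span_induction with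
    | mem N hN =>
      obtain ⟨a, b, hab, rfl⟩ := hN
      rw [Matrix.single_apply_of_ne]
      rintro ⟨rfl, rfl⟩
      exact hxy hab
    | zero => rfl
    | add N N' _ _ h h' => simp [h, h']
    | smul c N _ h => simp [h]
  · intro h
    rw [Matrix.matrix_eq_sum_single M]
    refine Submodule.sum_mem _ fun x _ => Submodule.sum_mem _ fun y _ => ?_
    by_cases hxy : G.Adj x y ∨ x = y
    · have hs : Matrix.single x y (M x y) = M x y • Matrix.single x y (1 : ℂ) := by
        simp [Matrix.smul_single]
      rw [hs]
      exact Submodule.smul_mem _ _ (Submodule.subset_span ⟨x, y, hxy, rfl⟩)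
    · simp [h x y hxy]

lemma mem_qGraph (d : ℕ) (M : Matrix (Fin d) (Fin d) ℂ) :
    M ∈ qGraph d ↔ ∃ c : ℂ, M = c • 1 := by
  rw [qGraph, Submodule.mem_span_singleton]
  simp only [eq_comm]

lemma mem_ncTensor_qGraph {A : Type} [Fintype A] [DecidableEq A]
    (S : Submodule ℂ (Matrix A A ℂ)) (d : ℕ) (M : Matrix (A × Fin d) (A × Fin d) ℂ) :
    M ∈ ncTensor S (qGraph d) ↔ ∃ X ∈ S, M = X ⊗ₖ (1 : Matrix (Fin d) (Fin d) ℂ) := by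
  constructor
  · intro hM
    induction hM using Submodule.span_induction with
    | mem N hN =>
      obtain ⟨X, hX, Y, hY, rfl⟩ := hN
      obtain ⟨c, rfl⟩ := (mem_qGraph d Y).1 hY
      exact ⟨c • X, S.smul_mem c hX, by rw [kronecker_smul, smul_kronecker]⟩
    | zero => exact ⟨0, S.zero_mem, by simp⟩
    | add N N' _ _ h h' =>
      obtain ⟨X, hX, rfl⟩ := h
      obtain ⟨X', hX', rfl⟩ := h'
      exact ⟨X + X', S.add_mem hX hX', by rw [add_kronecker]⟩
    | smul c N _ h =>
      obtain ⟨X, hX, rfl⟩ := h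
      exact ⟨c • X, S.smul_mem c hX, by rw [smul_kronecker]⟩
  · rintro ⟨X, hX, rfl⟩
    exact Submodule.subset_span ⟨X, hX, 1, Submodule.subset_span rfl, rfl⟩

end Membership

/-- Splitting off the last summand of a direct sum. -/
lemma ncDirectSum_castSucc_last {r : ℕ} {V : Fin (r + 1) → Type} [∀ i, Fintype (V i)]
    [∀ i, DecidableEq (V i)] (S : ∀ i, Submodule ℂ (Matrix (V i) (V i) ℂ)) :
    NCIso (ncDirectSum₂ (ncDirectSum fun i : Fin r => S i.castSucc) (S (Fin.last r)))
      (ncDirectSum S) := by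
  let f : (Σ i : Fin r, V i.castSucc) ⊕ V (Fin.last r) → Σ i, V i :=
    Sum.elim (fun p => ⟨p.1.castSucc, p.2⟩) fun x => ⟨Fin.last r, x⟩
  have hf : Function.Bijective f := by
    constructor
    · rintro (⟨i, x⟩ | x) (⟨j, y⟩ | y) h
      · simp only [f, Sum.elim_inl, Sigma.mk.injEq, Fin.castSucc_inj] at h
        obtain ⟨rfl, h⟩ := h
        simpa using h
      · simp only [f, Sum.elim_inl, Sum.elim_inr, Sigma.mk.injEq] at h
        exact absurd h.1 (Fin.castSucc_ne_last i)
      · simp only [f, Sum.elim_inl, Sum.elim_inr, Sigma.mk.injEq] at h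
        exact absurd h.1.symm (Fin.castSucc_ne_last j)
      · simpa [f] using h
    · rintro ⟨i, x⟩
      induction i using Fin.lastCases with
      | last => exact ⟨Sum.inr x, rfl⟩
      | cast i => exact ⟨Sum.inl ⟨i, x⟩, rfl⟩
  refine NCIso.of_equiv (Equiv.ofBijective f hf) fun N => ?_
  constructor
  · rintro ⟨h, hS⟩
    refine ⟨⟨fun p q hpq => h _ _ ?_, fun i => hS i.castSucc⟩, hS (Fin.last r),
      fun p x => h _ _ (Fin.castSucc_ne_last _), fun x p => h _ _ (Fin.castSucc_ne_last _).symm⟩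
    exact fun h' => hpq (Fin.castSucc_injective r h')
  · rintro ⟨⟨h, hS⟩, hlast, h₁, h₂⟩
    refine ⟨?_, fun i => ?_⟩
    · rintro ⟨i, x⟩ ⟨j, y⟩ hij
      induction i using Fin.lastCases with
      | last =>
        induction j using Fin.lastCases with
        | last => exact absurd rfl hij
        | cast j => exact h₂ x ⟨j, y⟩
      | cast i =>
        induction j using Fin.lastCases with
        | last => exact h₁ ⟨i, x⟩ y
        | cast j => exact h ⟨i, x⟩ ⟨j, y⟩ fun h' => hij (congrArg Fin.castSucc h')
    · induction i using Fin.lastCases with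
      | last => exact hlast
      | cast i => exact hS i

section Class

lemma inClass_bigSum {r : ℕ} (m : Fin r → ℕ) (G : ∀ d, SimpleGraph (Fin (m d))) :
    InClass (bigSum G) :=
  ⟨r, m, G, NCIso.refl _⟩

lemma inClass_graphNC_tensor_qGraph {n : ℕ} (G : SimpleGraph (Fin n)) (d : ℕ) :
    InClass (ncTensor (graphNC G) (qGraph (d + 1))) := by
  let m : Fin (d + 1) → ℕ := fun k => if k = Fin.last d then n else 0
  have hm : ∀ k, m k ≤ n := fun k => by simp only [m]; split_ifs <;> simp
  have hlast : n = m (Fin.last d) := by simp [m]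
  have heq : ∀ k, Fin (m k) → k = Fin.last d := fun k x => by
    by_contra hk
    have := x.pos
    simp [m, hk] at this
  let f : Fin n × Fin (d + 1) → Σ k : Fin (d + 1), Fin (m k) × Fin (k.1 + 1) :=
    fun p => ⟨Fin.last d, Fin.cast hlast p.1, p.2⟩
  have hf : Function.Bijective f := by
    constructor
    · rintro ⟨x, i⟩ ⟨y, j⟩ h
      simpa [f] using h
    · rintro ⟨k, x, i⟩
      obtain rfl := heq k x
      exact ⟨(Fin.cast hlast.symm x, i), rfl⟩
  refine ⟨d + 1, m, fun k => G.comap (Fin.castLE (hm k)),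
    NCIso.of_equiv (Equiv.ofBijective f hf) fun N => ?_⟩
  rw [mem_ncTensor_qGraph]
  constructor
  · rintro ⟨-, hN⟩
    obtain ⟨X, hX, hX'⟩ := (mem_ncTensor_qGraph _ _ _).1 (hN (Fin.last d))
    refine ⟨X.submatrix (Fin.cast hlast) (Fin.cast hlast), ?_, ?_⟩
    · rw [mem_graphNC] at hX ⊢
      intro x y hxy
      refine hX _ _ fun h => hxy ?_
      exact h.imp id fun h => Fin.cast_injective _ h
    · ext ⟨x, i⟩ ⟨y, j⟩
      exact congrFun (congrFun hX' (Fin.cast hlast x, i)) (Fin.cast hlast y, j)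
  · rintro ⟨X, hX, hX'⟩
    refine ⟨fun p q hpq => absurd ((heq _ p.2.1).trans (heq _ q.2.1).symm) hpq, fun k => ?_⟩
    refine (mem_ncTensor_qGraph _ _ _).2
      ⟨X.submatrix (Fin.castLE (hm k)) (Fin.castLE (hm k)), ?_, ?_⟩
    · rw [mem_graphNC] at hX ⊢
      intro x y hxy
      refine hX _ _ fun h => hxy ?_
      simpa using h
    · ext ⟨x, i⟩ ⟨y, j⟩
      obtain rfl := heq k x
      exact congrFun (congrFun hX' (Fin.cast hlast.symm x, i)) (Fin.cast hlast.symm y, j)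

lemma inClass_graphNC {n : ℕ} (G : SimpleGraph (Fin n)) : InClass (graphNC G) := by
  refine InClass.of_iso (NCIso.of_equiv (Equiv.prodUnique (Fin n) (Fin 1)).symm fun N => ?_)
    (inClass_graphNC_tensor_qGraph G 0)
  rw [mem_ncTensor_qGraph]
  constructor
  · rintro ⟨X, hX, rfl⟩
    convert hX using 1
    ext x y
    simp
  · intro h
    refine ⟨_, h, ?_⟩
    ext ⟨x, i⟩ ⟨y, j⟩
    simp [Subsingleton.elim i 0, Subsingleton.elim j 0]

lemma inClass_qGraph (d : ℕ) : InClass (qGraph (d + 1)) := by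
  refine InClass.of_iso (NCIso.of_equiv (Equiv.uniqueProd (Fin (d + 1)) (Fin 1)).symm fun N => ?_)
    (inClass_graphNC_tensor_qGraph (⊥ : SimpleGraph (Fin 1)) d)
  rw [mem_ncTensor_qGraph, mem_qGraph]
  constructor
  · rintro ⟨X, hX, rfl⟩
    refine ⟨X 0 0, ?_⟩
    ext i j
    simp
  · rintro ⟨c, hc⟩
    refine ⟨c • 1, ?_, ?_⟩
    · rw [mem_graphNC]
      intro x y hxy
      exact absurd (Or.inr (Subsingleton.elim x y)) hxy
    · ext ⟨x, i⟩ ⟨y, j⟩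
      have := congrFun (congrFun hc i) j
      simpa [Subsingleton.elim x 0, Subsingleton.elim y 0] using this

end Class

lemma qGraph_tensor_qGraph (d e : ℕ) :
    NCIso (ncTensor (qGraph d) (qGraph e)) (qGraph (d * e)) := by
  refine NCIso.of_equiv finProdFinEquiv fun N => ?_
  rw [mem_ncTensor_qGraph, mem_qGraph]
  constructor
  · rintro ⟨c, rfl⟩
    refine ⟨c • 1, (mem_qGraph _ _).2 ⟨c, rfl⟩, ?_⟩
    rw [smul_kronecker, one_kronecker_one]
    ext i j
    simp [Matrix.one_apply]
  · rintro ⟨X, hX, h⟩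
    obtain ⟨c, rfl⟩ := (mem_qGraph d X).1 hX
    refine ⟨c, ?_⟩
    rw [smul_kronecker, one_kronecker_one] at h
    have := congrArg (fun M => M.submatrix finProdFinEquiv.symm finProdFinEquiv.symm) h
    simpa [submatrix_smul] using this

lemma qGraph_one_add_qGraph_one :
    NCIso (ncDirectSum₂ (qGraph 1) (qGraph 1)) (graphNC (⊥ : SimpleGraph (Fin 2))) := by
  have hq : ∀ M : Matrix (Fin 1) (Fin 1) ℂ, M ∈ qGraph 1 := fun M => by
    refine (mem_qGraph 1 M).2 ⟨M 0 0, ?_⟩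
    ext i j
    simp [Subsingleton.elim i 0, Subsingleton.elim j 0]
  refine NCIso.of_equiv (finSumFinEquiv (m := 1) (n := 1)) fun N => ?_
  rw [mem_graphNC]
  constructor
  · intro h
    refine ⟨hq _, hq _, fun x y => h _ _ ?_, fun x y => h _ _ ?_⟩ <;>
      fin_cases x <;> fin_cases y <;> simp
  · rintro ⟨-, -, h₁, h₂⟩ x y hxy
    have h₁' : N 0 1 = 0 := h₁ 0 0
    have h₂' : N 1 0 = 0 := h₂ 0 0
    fin_cases x <;> fin_cases y <;> first | assumption | simp at hxy

lemma cohom_graphNC_bot_qGraph (d : ℕ) :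
    Cohom (graphNC (⊥ : SimpleGraph (Fin d))) (qGraph d) := by
  refine ⟨1, fun _ => 1, by simp, fun _ _ M hM => ?_⟩
  obtain ⟨c, rfl⟩ := (mem_qGraph d M).1 hM
  rw [mem_graphNC]
  intro x y hxy
  have : x ≠ y := fun h => hxy (Or.inr h)
  simp [this]

lemma cohom_qGraph_of_le {d e : ℕ} (h : d ≤ e) : Cohom (qGraph d) (qGraph e) := by
  have hE : ((1 : Matrix (Fin e) (Fin e) ℂ).submatrix id (Fin.castLE h))ᴴ *
      (1 : Matrix (Fin e) (Fin e) ℂ).submatrix id (Fin.castLE h) = 1 := by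
    ext x y
    simp [Matrix.mul_apply, Matrix.one_apply, eq_comm]
  refine ⟨1, fun _ => (1 : Matrix (Fin e) (Fin e) ℂ).submatrix id (Fin.castLE h),
    by simpa using hE, fun _ _ M hM => ?_⟩
  obtain ⟨c, rfl⟩ := (mem_qGraph e M).1 hM
  refine (mem_qGraph d _).2 ⟨c, ?_⟩
  rw [Matrix.mul_smul, Matrix.mul_one, Matrix.smul_mul, hE]

/-- A monotone, completely multiplicative function on the positive integers is a power. -/
lemma eq_rpow_logb_two_of_monotone_of_mul {f : ℕ → ℝ} (h1 : f 1 = 1) (h2 : 2 ≤ f 2)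
    (hmul : ∀ d e, 1 ≤ d → 1 ≤ e → f (d * e) = f d * f e)
    (hmono : ∀ d e, 1 ≤ d → d ≤ e → f d ≤ f e) (d : ℕ) (hd : 1 ≤ d) :
    f d = (d : ℝ) ^ Real.logb 2 (f 2) := by
  have hpos : ∀ k, 1 ≤ k → 0 < f k := fun k hk => by
    have := hmono 1 k le_rfl hk
    linarith
  have hpow : ∀ k, 1 ≤ k → ∀ n : ℕ, f (k ^ n) = f k ^ n := by
    intro k hk n
    induction n with
    | zero => simpa using h1
    | succ n ih => rw [pow_succ, hmul _ _ (Nat.one_le_pow _ _ hk) hk, ih, pow_succ]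
  have hd0 : (0 : ℝ) < d := by exact_mod_cast hd
  set a := Real.logb 2 (f 2) with ha
  have ha0 : 0 ≤ a := Real.logb_nonneg one_lt_two (by linarith)
  have hlog : ∀ n : ℕ, |n * (Real.logb 2 (f d) - a * Real.logb 2 d)| ≤ a := by
    intro n
    have hdn : d ^ n ≠ 0 := pow_ne_zero _ (by lia)
    have hlo := Nat.pow_log_le_self 2 hdn
    have hhi := Nat.lt_pow_succ_log_self one_lt_two (d ^ n)
    set k := Nat.log 2 (d ^ n)
    have e1 : (k : ℝ) ≤ n * Real.logb 2 d := by
      rw [← Real.logb_pow, Real.le_logb_iff_rpow_le one_lt_two (by positivity), Real.rpow_natCast]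
      exact_mod_cast hlo
    have e2 : n * Real.logb 2 d ≤ k + 1 := by
      rw [← Real.logb_pow, Real.logb_le_iff_le_rpow one_lt_two (by positivity)]
      have : (d : ℝ) ^ n ≤ 2 ^ (k + 1) := by exact_mod_cast hhi.le
      exact_mod_cast this
    have e3 : k * a ≤ n * Real.logb 2 (f d) := by
      rw [ha, ← Real.logb_pow, ← Real.logb_pow, ← hpow d hd, ← hpow 2 one_le_two]
      exact Real.logb_le_logb_of_le one_lt_two (hpos _ Nat.one_le_two_pow)
        (hmono _ _ Nat.one_le_two_pow hlo)
    have e4 : n * Real.logb 2 (f d) ≤ (k + 1) * a := by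
      have := Real.logb_le_logb_of_le one_lt_two (hpos _ (Nat.one_le_iff_ne_zero.2 hdn))
        (hmono _ _ (Nat.one_le_iff_ne_zero.2 hdn) hhi.le)
      rw [hpow d hd, hpow 2 one_le_two, Real.logb_pow, Real.logb_pow] at this
      exact_mod_cast this
    rw [abs_le]
    constructor <;> nlinarith
  have hzero : Real.logb 2 (f d) - a * Real.logb 2 d = 0 := by
    by_contra hne
    obtain ⟨n, hn⟩ := exists_nat_gt (a / |Real.logb 2 (f d) - a * Real.logb 2 d|)
    rw [div_lt_iff₀ (abs_pos.2 hne)] at hn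
    have := hlog n
    rw [abs_mul, Nat.abs_cast] at this
    linarith
  apply Real.logb_injOn_pos one_lt_two (hpos d hd) (Real.rpow_pos_of_pos hd0 a)
  rw [Real.logb_rpow_eq_mul_logb_of_pos hd0]
  linarith

theorem extension_structure
    (F : ∀ (A : Type) [Fintype A] [DecidableEq A], Submodule ℂ (Matrix A A ℂ) → ℝ)
    (hiso : ∀ (A B : Type) [Fintype A] [DecidableEq A] [Fintype B] [DecidableEq B]
      (S : Submodule ℂ (Matrix A A ℂ)) (T : Submodule ℂ (Matrix B B ℂ)),
      InClass S → InClass T → NCIso S T → F A S = F B T)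
    (hadd : ∀ (A B : Type) [Fintype A] [DecidableEq A] [Fintype B] [DecidableEq B]
      (S : Submodule ℂ (Matrix A A ℂ)) (T : Submodule ℂ (Matrix B B ℂ)),
      InClass S → InClass T → F (A ⊕ B) (ncDirectSum₂ S T) = F A S + F B T)
    (hmul : ∀ (A B : Type) [Fintype A] [DecidableEq A] [Fintype B] [DecidableEq B]
      (S : Submodule ℂ (Matrix A A ℂ)) (T : Submodule ℂ (Matrix B B ℂ)),
      InClass S → InClass T → F (A × B) (ncTensor S T) = F A S * F B T)
    (hnorm : F (Fin 1) (qGraph 1) = 1)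
    (hmono : ∀ (A B : Type) [Fintype A] [DecidableEq A] [Fintype B] [DecidableEq B]
      (S : Submodule ℂ (Matrix A A ℂ)) (T : Submodule ℂ (Matrix B B ℂ)),
      InClass S → InClass T → Cohom T S → F B T ≤ F A S) :
    1 ≤ Real.logb 2 (F (Fin 2) (qGraph 2)) ∧
    (∀ d : ℕ, 1 ≤ d → F (Fin d) (qGraph d) = (d : ℝ) ^ Real.logb 2 (F (Fin 2) (qGraph 2))) ∧
    ∀ (r : ℕ) (m : Fin r → ℕ) (G : ∀ d, SimpleGraph (Fin (m d))),
      F _ (bigSum G) =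
        ∑ d : Fin r, F (Fin (m d)) (graphNC (G d)) *
          ((d.1 + 1 : ℕ) : ℝ) ^ Real.logb 2 (F (Fin 2) (qGraph 2)) := by
  have hF2 : 2 ≤ F (Fin 2) (qGraph 2) := by
    have h := hmono _ _ _ _ (inClass_qGraph 1) (inClass_graphNC (⊥ : SimpleGraph (Fin 2)))
      (cohom_graphNC_bot_qGraph 2)
    rw [← hiso _ _ _ _ (InClass.of_iso qGraph_one_add_qGraph_one (inClass_graphNC _))
      (inClass_graphNC _) qGraph_one_add_qGraph_one,
      hadd _ _ _ _ (inClass_qGraph 0) (inClass_qGraph 0), hnorm] at h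
    linarith
  have hq : ∀ d : ℕ, 1 ≤ d → InClass (qGraph d) := fun d hd => by
    obtain ⟨k, rfl⟩ := Nat.exists_eq_add_of_le' hd
    exact inClass_qGraph k
  have hpow : ∀ d : ℕ, 1 ≤ d →
      F (Fin d) (qGraph d) = (d : ℝ) ^ Real.logb 2 (F (Fin 2) (qGraph 2)) := by
    refine eq_rpow_logb_two_of_monotone_of_mul (f := fun d => F (Fin d) (qGraph d)) hnorm hF2
      (fun d e hd he => ?_)
      fun d e hd hde => hmono _ _ _ _ (hq e (hd.trans hde)) (hq d hd) (cohom_qGraph_of_le hde)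
    have hde := hq (d * e) (Nat.mul_pos hd he)
    rw [← hmul _ _ _ _ (hq d hd) (hq e he)]
    exact (hiso _ _ _ _ (InClass.of_iso (qGraph_tensor_qGraph d e) hde) hde
      (qGraph_tensor_qGraph d e)).symm
  refine ⟨?_, hpow, fun r => ?_⟩
  · rw [Real.le_logb_iff_rpow_le one_lt_two (by linarith), Real.rpow_one]
    exact hF2
  · induction r with
    | zero =>
      intro m G
      have hG := inClass_bigSum m G
      have hs : NCIso (ncDirectSum₂ (bigSum G) (bigSum G)) (bigSum G) := by
        refine NCIso.of_equiv (Equiv.equivOfIsEmpty _ _) fun N => ?_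
        have hN : N = 0 := Subsingleton.elim _ _
        subst hN
        exact ⟨fun _ => Submodule.zero_mem _, fun _ => Submodule.zero_mem _⟩
      have h := hiso _ _ _ _ (InClass.of_iso hs hG) hG hs
      rw [hadd _ _ _ _ hG hG] at h
      rw [Finset.univ_eq_empty, Finset.sum_empty]
      linarith
    | succ r ih =>
      intro m G
      have hG := inClass_bigSum m G
      have hs : NCIso (ncDirectSum₂ (bigSum fun d : Fin r => G d.castSucc)
          (ncTensor (graphNC (G (Fin.last r))) (qGraph (r + 1)))) (bigSum G) :=
        ncDirectSum_castSucc_last fun d : Fin (r + 1) => ncTensor (graphNC (G d)) (qGraph (d.1 + 1))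
      rw [Fin.sum_univ_castSucc, ← hiso _ _ _ _ (InClass.of_iso hs hG) hG hs,
        hadd _ _ _ _ (inClass_bigSum _ _) (inClass_graphNC_tensor_qGraph _ _),
        hmul _ _ _ _ (inClass_graphNC _) (inClass_qGraph r), hpow (r + 1) (Nat.le_add_left 1 r),
        ih (fun d => m d.castSucc) fun d => G d.castSucc]
      rfl

end NCG
end
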